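/- arXiv:2403.01064 — 2 statements merged into one kernel-verified Lean document; each statement's English description precedes it below -/
import Mathlib

section
/- Let q ∈ ℂ with 0 < |q| < 1, let A : ℤ → ℂ be any sequence, and let b, x ∈ ℂ with b ≠ 0 and x ≠ q^{-m} for every m ∈ ℕ. Assume the families (i,j) ↦ A_{i-j} q^{ij} (x/b)^j (bq^{-i};q)_j / ((q;q)_i (q;q)_j) and (i,j) ↦ A_{i-j} q^{ij} (x/b)^j (b;q)_j / ((q;q)_i (q;q)_j (x;q)_j), both indexed by ℕ×ℕ, are absolutely summable. Then ∑_{i,j≥0} A_{i-j} q^{ij} (x/b)^j (bq^{-i};q)_j / ((q;q)_i (q;q)_j) = (x;q)_∞ · ∑_{i,j≥0} A_{i-j} q^{ij} (x/b)^j (b;q)_j / ((q;q)_i (q;q)_j (x;q)_j). -/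
/-- The finite q-shifted factorial `(a;q)_n = ∏_{k=0}^{n-1} (1 - a q^k)`. -/
noncomputable def qPoch (a q : ℂ) (n : ℕ) : ℂ := ∏ k ∈ Finset.range n, (1 - a * q ^ k)

/-- The infinite q-shifted factorial `(a;q)_∞ = ∏_{k=0}^{∞} (1 - a q^k)`. -/
noncomputable def qPochInf (a q : ℂ) : ℂ := ∏' k : ℕ, (1 - a * q ^ k)

noncomputable def cP (q a : ℂ) (k : ℕ) : ℂ := ∏ l ∈ Finset.range k, (a - q ^ l)

lemma cP_succ (q a : ℂ) (k : ℕ) : cP q a (k+1) = cP q a k * (a - q ^ k) := by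
  simp [cP, Finset.prod_range_succ]

lemma qPoch_succ (a q : ℂ) (k : ℕ) : qPoch a q (k+1) = qPoch a q k * (1 - a * q ^ k) := by
  simp [qPoch, Finset.prod_range_succ]

lemma one_sub_ne (q : ℂ) (hq1 : ‖q‖ < 1) (k : ℕ) : 1 - q ^ (k+1) ≠ 0 := by
  intro h
  have h2 : ‖q ^ (k+1)‖ < 1 := by
    rw [norm_pow]; exact pow_lt_one₀ (norm_nonneg _) hq1 (by omega)
  rw [← sub_eq_zero.mp h] at h2
  simp at h2

lemma W_succ (q : ℂ) (k : ℕ) : qPoch q q (k+1) = qPoch q q k * (1 - q ^ (k+1)) := by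
  rw [qPoch_succ, pow_succ']

lemma W_ne (q : ℂ) (hq1 : ‖q‖ < 1) (k : ℕ) : qPoch q q k ≠ 0 := by
  induction k with
  | zero => simp [qPoch]
  | succ k ih => rw [W_succ]; exact mul_ne_zero ih (one_sub_ne q hq1 k)

lemma vander (q : ℂ) (hq1 : ‖q‖ < 1) (y c : ℂ) (N : ℕ) :
    ∑ p ∈ Finset.HasAntidiagonal.antidiagonal N, y ^ p.1 * cP q c p.1 * cP q y p.2 /
      (qPoch q q p.1 * qPoch q q p.2) = cP q (y * c) N / qPoch q q N := by
  induction N with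
  | zero => simp [cP, qPoch]
  | succ N ih =>
    have hN := one_sub_ne q hq1 N
    have hW := W_ne q hq1
    have key : (1 - q ^ (N+1)) * ∑ p ∈ Finset.HasAntidiagonal.antidiagonal (N+1), y ^ p.1 * cP q c p.1 * cP q y p.2 /
      (qPoch q q p.1 * qPoch q q p.2) = (y * c - q ^ N) *
      ∑ p ∈ Finset.HasAntidiagonal.antidiagonal N, y ^ p.1 * cP q c p.1 * cP q y p.2 /
      (qPoch q q p.1 * qPoch q q p.2) := by
      have e1 : (1 - q ^ (N+1)) * ∑ p ∈ Finset.HasAntidiagonal.antidiagonal (N+1), y ^ p.1 * cP q c p.1 * cP q y p.2 /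
        (qPoch q q p.1 * qPoch q q p.2) =
        ∑ p ∈ Finset.HasAntidiagonal.antidiagonal (N+1), (1 - q ^ p.1) * (y ^ p.1 * cP q c p.1 * cP q y p.2 /
        (qPoch q q p.1 * qPoch q q p.2)) +
        ∑ p ∈ Finset.HasAntidiagonal.antidiagonal (N+1), q ^ p.1 * (1 - q ^ p.2) * (y ^ p.1 * cP q c p.1 * cP q y p.2 /
        (qPoch q q p.1 * qPoch q q p.2)) := by
        rw [Finset.mul_sum, ← Finset.sum_add_distrib]
        refine Finset.sum_congr rfl fun p hp => ?_
        rw [← Finset.HasAntidiagonal.mem_antidiagonal.mp hp, pow_add]; ring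
      rw [e1, Finset.Nat.sum_antidiagonal_succ, Finset.Nat.sum_antidiagonal_succ', Finset.mul_sum]
      simp only [pow_zero, sub_self, zero_mul, mul_zero, zero_add, add_zero]
      rw [← Finset.sum_add_distrib]
      refine Finset.sum_congr rfl fun p hp => ?_
      rw [← Finset.HasAntidiagonal.mem_antidiagonal.mp hp]
      obtain ⟨j, k⟩ := p
      simp only [W_succ, cP_succ]
      have := hW j
      have := hW k
      have := one_sub_ne q hq1 j
      have := one_sub_ne q hq1 k
      field_simp
      ring
    rw [ih] at key
    rw [cP_succ, W_succ]
    apply mul_left_cancel₀ hN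
    rw [key]
    have := hW N
    field_simp

lemma cP_shift (q : ℂ) (i k : ℕ) :
    cP q (q ^ (i+k)) k * qPoch q q i = cP q 0 k * qPoch q q (i+k) := by
  induction k with
  | zero => simp [cP]
  | succ k ih =>
    have : cP q (q ^ (i+(k+1))) (k+1) = (q ^ (i+k+1) - 1) * q ^ k * cP q (q ^ (i+k)) k := by
      unfold cP
      rw [Finset.prod_range_succ']
      have : ∀ l, q ^ (i+(k+1)) - q ^ (l+1) = q * (q ^ (i+k) - q ^ l) := by intro l; ring
      simp only [this, Finset.prod_mul_distrib, Finset.prod_const, Finset.card_range]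
      ring
    rw [this, cP_succ, ← add_assoc, W_succ]
    linear_combination (q ^ (i+k+1) - 1) * q ^ k * ih

lemma cP_zero_of_lt (q : ℂ) (M k : ℕ) (h : M < k) : cP q (q ^ M) k = 0 :=
  Finset.prod_eq_zero (Finset.mem_range.mpr h) (sub_self _)

lemma eul_summable (q : ℂ) (hq1 : ‖q‖ < 1) (z : ℂ) :
    Summable fun k : ℕ => ‖cP q 0 k / qPoch q q k * z ^ k‖ := by
  have hlim : Filter.Tendsto (fun k : ℕ => ‖z * q ^ k / (1 - q ^ (k+1))‖) Filter.atTop (nhds 0) := by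
    have h0 := tendsto_pow_atTop_nhds_zero_of_norm_lt_one hq1
    have h1 := (Filter.tendsto_add_atTop_iff_nat 1).mpr h0
    have := ((h0.const_mul z).div (h1.const_sub 1) (by simp)).norm
    simpa using this
  refine summable_of_ratio_norm_eventually_le (r := 1/2) (by norm_num) ?_
  filter_upwards [hlim.eventually (gt_mem_nhds (show (0:ℝ) < 1/2 by norm_num))] with k hk
  rw [norm_norm, norm_norm]
  have : cP q 0 (k+1) / qPoch q q (k+1) * z ^ (k+1) =
      -(z * q ^ k / (1 - q ^ (k+1))) * (cP q 0 k / qPoch q q k * z ^ k) := by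
    rw [cP_succ, W_succ]
    have := W_ne q hq1 k
    have := one_sub_ne q hq1 k
    field_simp
    ring
  rw [this, norm_mul, norm_neg]
  exact mul_le_mul_of_nonneg_right hk.le (norm_nonneg _)

noncomputable def eul (q z : ℂ) : ℂ := ∑' k : ℕ, cP q 0 k / qPoch q q k * z ^ k

lemma eul_step (q : ℂ) (hq1 : ‖q‖ < 1) (z : ℂ) : eul q z = (1 - z) * eul q (z * q) := by
  have s1 := (eul_summable q hq1 z).of_norm
  have s2 := (eul_summable q hq1 (z*q)).of_norm
  have h : eul q z - eul q (z*q) = - z * eul q (z*q) := by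
    unfold eul
    rw [← s1.tsum_sub s2, (s1.sub s2).tsum_eq_zero_add, ← tsum_mul_left]
    simp only [pow_zero, sub_self, zero_add]
    refine tsum_congr fun k => ?_
    rw [cP_succ, W_succ]
    have := W_ne q hq1 k
    have := one_sub_ne q hq1 k
    field_simp
    ring
  linear_combination h

lemma eul_iter (q : ℂ) (hq1 : ‖q‖ < 1) (z : ℂ) (n : ℕ) :
    eul q z = qPoch z q n * eul q (z * q ^ n) := by
  induction n with
  | zero => simp [qPoch]
  | succ n ih => rw [ih, eul_step q hq1 (z * q ^ n), qPoch_succ, pow_succ]; ring_nf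

lemma qPoch_tendsto (q : ℂ) (hq1 : ‖q‖ < 1) (z : ℂ) :
    Filter.Tendsto (fun n => qPoch z q n) Filter.atTop (nhds (qPochInf z q)) := by
  have hs : Summable fun k : ℕ => ‖-(z * q ^ k)‖ := by
    simp only [norm_neg, norm_mul, norm_pow]
    exact (summable_geometric_of_lt_one (norm_nonneg _) hq1).mul_left _
  have := (multipliable_one_add_of_summable hs).hasProd.tendsto_prod_nat
  simpa [qPoch, qPochInf, sub_eq_add_neg] using this

lemma eul_eq (q : ℂ) (hq1 : ‖q‖ < 1) (z : ℂ) : qPochInf z q = eul q z := by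
  have h1 : Filter.Tendsto (fun n : ℕ => eul q (z * q ^ n)) Filter.atTop (nhds 1) := by
    have e1 : (1:ℂ) = ∑' k : ℕ, cP q 0 k / qPoch q q k * (0:ℂ) ^ k := by
      rw [tsum_eq_single 0]
      · simp [cP, qPoch]
      · intro k hk; simp [hk]
    rw [e1]
    unfold eul
    refine tendsto_tsum_of_dominated_convergence (eul_summable q hq1 z) ?_ ?_
    · intro k
      have h0 := (tendsto_pow_atTop_nhds_zero_of_norm_lt_one hq1).const_mul z
      rw [mul_zero] at h0
      exact (h0.pow k).const_mul _
    · refine Filter.Eventually.of_forall fun n k => ?_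
      rw [norm_mul, norm_mul]
      refine mul_le_mul_of_nonneg_left ?_ (norm_nonneg _)
      rw [norm_pow, norm_pow]
      refine pow_le_pow_left₀ (norm_nonneg _) ?_ _
      rw [norm_mul, norm_pow]
      exact mul_le_of_le_one_right (norm_nonneg _) (pow_le_one₀ (norm_nonneg _) hq1.le)
  have h2 := (qPoch_tendsto q hq1 z).mul h1
  rw [mul_one] at h2
  refine tendsto_nhds_unique h2 ?_
  simp only [← eul_iter q hq1 z]
  exact tendsto_const_nhds

lemma cP_inv (q b : ℂ) (hb : b ≠ 0) (x : ℂ) (j : ℕ) :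
    (x / b) ^ j * qPoch b q j = x ^ j * cP q (1 / b) j := by
  induction j with
  | zero => simp [cP, qPoch]
  | succ j ih =>
    rw [cP_succ, qPoch_succ, pow_succ, pow_succ]
    have : x / b * (1 - b * q ^ j) = x * (1 / b - q ^ j) := by field_simp
    linear_combination x / b * (1 - b * q ^ j) * ih + x ^ j * cP q (1 / b) j * this

lemma cP_inv' (q b : ℂ) (hq : q ≠ 0) (hb : b ≠ 0) (x : ℂ) (M j : ℕ) :
    q ^ (M * j) * (x / b) ^ j * qPoch (b * q ^ (-(M:ℤ))) q j = x ^ j * cP q (q ^ M * (1 / b)) j := by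
  have := cP_inv q (b * q ^ (-(M:ℤ))) (mul_ne_zero hb (zpow_ne_zero _ hq)) x j
  have e : 1 / (b * q ^ (-(M:ℤ))) = q ^ M * (1 / b) := by
    rw [zpow_neg, zpow_natCast]; field_simp
  rw [e] at this
  rw [← this, pow_mul, ← mul_pow]
  congr 2
  rw [zpow_neg, zpow_natCast]; field_simp

theorem stmt4 (q : ℂ) (hq0 : 0 < ‖q‖) (hq1 : ‖q‖ < 1)
    (A : ℤ → ℂ) (b x : ℂ) (hb : b ≠ 0)
    (hx : ∀ m : ℕ, x ≠ q ^ (-(m : ℤ)))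
    (h1 : Summable (fun p : ℕ × ℕ => ‖A ((p.1 : ℤ) - (p.2 : ℤ)) * q ^ (p.1 * p.2) *
      (x / b) ^ p.2 * qPoch (b * q ^ (-(p.1 : ℤ))) q p.2 /
      (qPoch q q p.1 * qPoch q q p.2)‖))
    (h2 : Summable (fun p : ℕ × ℕ => ‖A ((p.1 : ℤ) - (p.2 : ℤ)) * q ^ (p.1 * p.2) *
      (x / b) ^ p.2 * qPoch b q p.2 /
      (qPoch q q p.1 * qPoch q q p.2 * qPoch x q p.2)‖)) :
    ∑' p : ℕ × ℕ, A ((p.1 : ℤ) - (p.2 : ℤ)) * q ^ (p.1 * p.2) *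
      (x / b) ^ p.2 * qPoch (b * q ^ (-(p.1 : ℤ))) q p.2 /
      (qPoch q q p.1 * qPoch q q p.2)
    = qPochInf x q * ∑' p : ℕ × ℕ, A ((p.1 : ℤ) - (p.2 : ℤ)) * q ^ (p.1 * p.2) *
      (x / b) ^ p.2 * qPoch b q p.2 /
      (qPoch q q p.1 * qPoch q q p.2 * qPoch x q p.2) := by
  have hq : q ≠ 0 := norm_pos_iff.mp hq0
  have hW := W_ne q hq1
  have hX : ∀ n, qPoch x q n ≠ 0 := by
    intro n
    refine Finset.prod_ne_zero_iff.mpr fun k _ h => hx k ?_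
    rw [zpow_neg, zpow_natCast]
    exact eq_inv_of_mul_eq_one_left (sub_eq_zero.mp h).symm
  obtain ⟨C, hC⟩ := (qPoch_tendsto q hq1 x).norm.bddAbove_range
  have hC' : ∀ n, ‖qPoch x q n‖ ≤ C := fun n => hC ⟨n, rfl⟩
  set G : ℕ × ℕ → ℂ := fun p => A ((p.1 : ℤ) - (p.2 : ℤ)) * q ^ (p.1 * p.2) *
      (x / b) ^ p.2 * qPoch b q p.2 / (qPoch q q p.1 * qPoch q q p.2) with hG
  have sG : Summable fun p => ‖G p‖ := by
    refine Summable.of_nonneg_of_le (fun _ => norm_nonneg _) (fun p => ?_) (h2.mul_left C)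
    have : G p = qPoch x q p.2 * (A ((p.1 : ℤ) - (p.2 : ℤ)) * q ^ (p.1 * p.2) *
      (x / b) ^ p.2 * qPoch b q p.2 /
      (qPoch q q p.1 * qPoch q q p.2 * qPoch x q p.2)) := by
      simp only [hG]
      have := hX p.2
      have := hW p.1
      have := hW p.2
      field_simp
    rw [this, norm_mul]
    exact mul_le_mul_of_nonneg_right (hC' _) (norm_nonneg _)
  set F : (ℕ × ℕ) × ℕ → ℂ := fun t => G t.1 * (cP q 0 t.2 / qPoch q q t.2 * (x * q ^ t.1.2) ^ t.2)
    with hF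
  have sF : Summable F := by
    refine Summable.of_norm_bounded
      (g := fun t : (ℕ × ℕ) × ℕ => ‖G t.1‖ * ‖cP q 0 t.2 / qPoch q q t.2 * x ^ t.2‖)
      (sG.mul_of_nonneg (eul_summable q hq1 x) (fun _ => norm_nonneg _) (fun _ => norm_nonneg _)) ?_
    intro t
    simp only [hF]
    rw [norm_mul]
    refine mul_le_mul_of_nonneg_left ?_ (norm_nonneg _)
    rw [norm_mul, norm_mul]
    refine mul_le_mul_of_nonneg_left ?_ (norm_nonneg _)
    rw [norm_pow, norm_pow]
    refine pow_le_pow_left₀ (norm_nonneg _) ?_ _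
    rw [norm_mul, norm_pow]
    exact mul_le_of_le_one_right (norm_nonneg _) (pow_le_one₀ (norm_nonneg _) hq1.le)
  have rhs : qPochInf x q * ∑' p : ℕ × ℕ, A ((p.1 : ℤ) - (p.2 : ℤ)) * q ^ (p.1 * p.2) *
      (x / b) ^ p.2 * qPoch b q p.2 /
      (qPoch q q p.1 * qPoch q q p.2 * qPoch x q p.2) = ∑' t, F t := by
    rw [sF.tsum_prod, ← tsum_mul_left]
    refine tsum_congr fun p => ?_
    simp only [hF]
    rw [tsum_mul_left]
    change _ = G p * eul q (x * q ^ p.2)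
    rw [eul_eq q hq1, eul_iter q hq1 x p.2]
    simp only [hG]
    have := hX p.2
    have := hW p.1
    have := hW p.2
    field_simp
  set H : ℕ × (ℕ × ℕ) → ℂ := fun t => A ((t.1 : ℤ) - ((t.2.1 + t.2.2 : ℕ) : ℤ)) *
    x ^ (t.2.1 + t.2.2) / qPoch q q t.1 *
    ((q ^ t.1) ^ t.2.1 * cP q (1 / b) t.2.1 * cP q (q ^ t.1) t.2.2 /
      (qPoch q q t.2.1 * qPoch q q t.2.2)) with hH
  let φ : (ℕ × ℕ) × ℕ → ℕ × (ℕ × ℕ) := fun t => (t.1.1 + t.2, (t.1.2, t.2))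
  have hφ : Function.Injective φ := by
    rintro ⟨⟨i, j⟩, k⟩ ⟨⟨i', j'⟩, k'⟩ h
    simp only [φ, Prod.mk.injEq] at h ⊢
    omega
  have hFH : H ∘ φ = F := by
    funext ⟨⟨i, j⟩, k⟩
    simp only [hF, hG, hH, φ, Function.comp]
    have e1 := cP_shift q i k
    have e2 := cP_inv q b hb x j
    have e3 : ((i + k : ℕ) : ℤ) - ((j + k : ℕ) : ℤ) = (i : ℤ) - j := by push_cast; ring
    rw [e3]
    have e1' : cP q (q ^ (i+k)) k = cP q 0 k * qPoch q q (i+k) / qPoch q q i :=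
      eq_div_of_mul_eq (hW i) e1
    rw [e1', mul_assoc (A _ * _) ((x / b) ^ j), e2]
    have := hW i
    have := hW j
    have := hW k
    have := hW (i+k)
    field_simp
    ring
  have hsupp : ∀ t, t ∉ Set.range φ → H t = 0 := by
    rintro ⟨M, j, k⟩ ht
    have : M < k := by
      by_contra hc
      exact ht ⟨((M - k, j), k), by simp only [φ]; rw [Nat.sub_add_cancel (not_lt.mp hc)]⟩
    simp [hH, cP_zero_of_lt q M k this]
  have sH : Summable H := (hφ.summable_iff hsupp).mp (hFH ▸ sF)
  have tH : ∑' t, F t = ∑' t, H t := by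
    rw [← hFH]
    exact hφ.tsum_eq (fun t ht => by by_contra hc; exact ht (hsupp t hc))
  rw [rhs, tH, sH.tsum_prod, h1.of_norm.tsum_prod]
  refine tsum_congr fun M => ?_
  have sM : Summable fun p : ℕ × ℕ => H (M, p) := sH.prod_factor M
  rw [← (Finset.HasAntidiagonal.sigmaAntidiagonalEquivProd (A := ℕ)).tsum_eq (fun p : ℕ × ℕ => H (M, p))]
  have sM' := (Finset.HasAntidiagonal.sigmaAntidiagonalEquivProd (A := ℕ)).summable_iff.mpr sM
  refine Eq.trans ?_ (sM'.tsum_sigma' (fun n => (hasSum_fintype _).summable)).symm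
  refine tsum_congr fun N => ?_
  rw [tsum_fintype]
  have e : ∑ p : Finset.HasAntidiagonal.antidiagonal N, H (M, (p : ℕ × ℕ)) =
      ∑ p ∈ Finset.HasAntidiagonal.antidiagonal N, H (M, p) := Finset.sum_coe_sort _ (fun p => H (M, p))
  refine Eq.trans ?_ e.symm
  have e2 : ∑ p ∈ Finset.HasAntidiagonal.antidiagonal N, H (M, p) = A ((M : ℤ) - (N : ℤ)) * x ^ N / qPoch q q M *
      ∑ p ∈ Finset.HasAntidiagonal.antidiagonal N, (q ^ M) ^ p.1 * cP q (1 / b) p.1 * cP q (q ^ M) p.2 /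
      (qPoch q q p.1 * qPoch q q p.2) := by
    rw [Finset.mul_sum]
    refine Finset.sum_congr rfl fun p hp => ?_
    simp only [hH]
    rw [Finset.HasAntidiagonal.mem_antidiagonal.mp hp]
  rw [e2, vander q hq1]
  have e3 := cP_inv' q b hq hb x M N
  have := hW M
  have := hW N
  dsimp only
  rw [mul_assoc (A _), mul_assoc (A _), e3]
  field_simp
end

section
/- Let q ∈ ℂ with 0 < |q| < 1, and let x, y ∈ ℂ with |x| < 1 and y ≠ q^{-m} for every m ∈ ℕ. Then ∑_{n≥0} x^n / ((q;q)_n (y;q)_n) = [1 / ((x;q)_∞ (y;q)_∞)] · ∑_{n≥0} (x;q)_n (-1)^n q^{n(n-1)/2} y^n / (q;q)_n. -/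
theorem qP_succ (a q : ℂ) (n : ℕ) : qPoch a q (n+1) = qPoch a q n * (1 - a * q ^ n) := by
  simp [qPoch, Finset.prod_range_succ]

theorem qP_zero (a q : ℂ) : qPoch a q 0 = 1 := by simp [qPoch]

theorem qP_add (a q : ℂ) (n m : ℕ) :
    qPoch a q (n+m) = qPoch a q n * qPoch (a * q ^ n) q m := by
  simp [qPoch, Finset.prod_range_add, pow_add, mul_assoc]

theorem qP_tendsto (a q : ℂ) (hq1 : ‖q‖ < 1) :
    Filter.Tendsto (fun n => qPoch a q n) Filter.atTop (nhds (qPochInf a q)) := by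
  have h : Multipliable (fun k : ℕ => 1 + (-(a * q ^ k))) := by
    apply multipliable_one_add_of_summable
    simp only [norm_neg, norm_mul, norm_pow]
    exact (summable_geometric_of_lt_one (norm_nonneg _) hq1).mul_left _
  have := h.hasProd.tendsto_prod_nat
  simpa only [← sub_eq_add_neg, qPoch, qPochInf] using this

theorem qPI_split (a q : ℂ) (hq1 : ‖q‖ < 1) (n : ℕ) :
    qPochInf a q = qPoch a q n * qPochInf (a * q ^ n) q := by
  have h1 := (qP_tendsto a q hq1).comp (Filter.tendsto_add_atTop_nat n)
  have h2 := (qP_tendsto (a * q ^ n) q hq1).const_mul (qPoch a q n)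
  refine tendsto_nhds_unique h1 (h2.congr fun m => ?_)
  simp only [Function.comp]
  rw [add_comm m n, qP_add]

theorem one_sub_pow_ne (q : ℂ) (hq1 : ‖q‖ < 1) (n : ℕ) : 1 - q * q ^ n ≠ 0 := by
  intro h
  have h1 : ‖q ^ (n+1)‖ < 1 := by
    rw [norm_pow]; exact pow_lt_one₀ (norm_nonneg _) hq1 (by omega)
  rw [pow_succ', ← sub_eq_zero.mp h] at h1
  simp at h1

theorem qq_ne (q : ℂ) (hq1 : ‖q‖ < 1) (n : ℕ) : qPoch q q n ≠ 0 :=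
  Finset.prod_ne_zero_iff.mpr fun k _ => one_sub_pow_ne q hq1 k

theorem ratio_summable (f c : ℕ → ℂ) (l : ℂ) (hl : ‖l‖ < 1) (hf : ∀ n, f (n+1) = f n * c n)
    (hc : Filter.Tendsto c Filter.atTop (nhds l)) : Summable (fun n => ‖f n‖) := by
  obtain ⟨r, hr1, hr2⟩ := exists_between hl
  apply summable_of_ratio_norm_eventually_le hr2
  filter_upwards [hc.norm.eventually_lt_const hr1] with n hn
  rw [norm_norm, norm_norm, hf, norm_mul, mul_comm]
  gcongr

theorem tri_succ (n : ℕ) : (n+1) * (n+1-1) / 2 = n * (n-1) / 2 + n := by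
  rw [← Finset.sum_range_id_mul_two, ← Finset.sum_range_id_mul_two n]
  simp [Finset.sum_range_succ]

theorem one_sub_tendsto (q : ℂ) (hq1 : ‖q‖ < 1) :
    Filter.Tendsto (fun n : ℕ => 1 - q * q ^ n) Filter.atTop (nhds 1) := by
  simpa using ((tendsto_pow_atTop_nhds_zero_of_norm_lt_one hq1).const_mul q).const_sub 1

theorem sum1 (q : ℂ) (hq1 : ‖q‖ < 1) (x : ℂ) (hx : ‖x‖ < 1) :
    Summable (fun n => ‖1 / qPoch q q n * x ^ n‖) := by
  refine ratio_summable _ (fun n => x / (1 - q * q ^ n)) x hx (fun n => ?_) ?_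
  · have := qq_ne q hq1 n
    have := one_sub_pow_ne q hq1 n
    rw [qP_succ, pow_succ]; field_simp
  · simpa [Pi.div_def] using (tendsto_const_nhds (x := x)).div (one_sub_tendsto q hq1) one_ne_zero

noncomputable def tauq (q : ℂ) (n : ℕ) : ℂ := (-1 : ℂ) ^ n * q ^ (n * (n - 1) / 2) / qPoch q q n

theorem tauq_succ (q : ℂ) (hq1 : ‖q‖ < 1) (n : ℕ) :
    tauq q (n+1) * (1 - q * q ^ n) = - (tauq q n * q ^ n) := by
  have := qq_ne q hq1 n
  have := one_sub_pow_ne q hq1 n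
  rw [tauq, tauq, qP_succ, tri_succ, pow_add q, pow_succ (-1 : ℂ), div_mul_eq_mul_div,
    mul_div_mul_right _ _ this]; ring

theorem sum2 (q : ℂ) (hq1 : ‖q‖ < 1) (x : ℂ) :
    Summable (fun n => ‖tauq q n * x ^ n‖) := by
  refine ratio_summable _ (fun n => (-x * q ^ n) / (1 - q * q ^ n)) 0 (by simp) (fun n => ?_) ?_
  · have h := one_sub_pow_ne q hq1 n
    rw [mul_div_assoc', eq_div_iff h, pow_succ]
    linear_combination x ^ n * x * tauq_succ q hq1 n
  · simpa [Pi.div_def] using ((tendsto_pow_atTop_nhds_zero_of_norm_lt_one hq1).const_mul (-x)).div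
      (one_sub_tendsto q hq1) one_ne_zero

theorem lim0 (q : ℂ) (hq1 : ‖q‖ < 1) (a : ℕ → ℂ) (z : ℂ)
    (h : Summable (fun n => ‖a n * z ^ n‖)) :
    Filter.Tendsto (fun N : ℕ => ∑' n, a n * (z * q ^ N) ^ n) Filter.atTop (nhds (a 0)) := by
  have key := tendsto_tsum_of_dominated_convergence (𝓕 := Filter.atTop)
    (f := fun (N n : ℕ) => a n * (z * q ^ N) ^ n) (g := fun n => if n = 0 then a 0 else 0) h ?_ ?_
  · simpa using key
  · intro n
    have h0 : Filter.Tendsto (fun N : ℕ => z * q ^ N) Filter.atTop (nhds 0) := by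
      simpa using (tendsto_pow_atTop_nhds_zero_of_norm_lt_one hq1).const_mul z
    have := (h0.pow n).const_mul (a n)
    by_cases hn : n = 0
    · subst hn; simp
    · simpa [hn] using this
  · refine Filter.Eventually.of_forall fun N n => ?_
    rw [mul_pow, ← mul_assoc, norm_mul]
    apply mul_le_of_le_one_right (norm_nonneg _)
    rw [norm_pow, norm_pow]
    exact pow_le_one₀ (by positivity) (pow_le_one₀ (norm_nonneg _) hq1.le)

theorem norm_mul_pow_lt (q x : ℂ) (hq1 : ‖q‖ < 1) (hx : ‖x‖ < 1) (N : ℕ) : ‖x * q ^ N‖ < 1 := by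
  rw [norm_mul, norm_pow]
  exact (mul_le_of_le_one_right (norm_nonneg _) (pow_le_one₀ (norm_nonneg _) hq1.le)).trans_lt hx

theorem euler1 (q : ℂ) (hq1 : ‖q‖ < 1) (x : ℂ) (hx : ‖x‖ < 1) :
    qPochInf x q * ∑' n, 1 / qPoch q q n * x ^ n = 1 := by
  have step : ∀ z : ℂ, ‖z‖ < 1 → ∑' n, 1 / qPoch q q n * (z * q) ^ n
      = (1 - z) * ∑' n, 1 / qPoch q q n * z ^ n := by
    intro z hz
    have s1 := (sum1 q hq1 z hz).of_norm
    have s2 := (sum1 q hq1 (z * q) (by simpa using norm_mul_pow_lt q z hq1 hz 1)).of_norm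
    have e : ∑' n, 1 / qPoch q q n * z ^ n - ∑' n, 1 / qPoch q q n * (z * q) ^ n
        = z * ∑' n, 1 / qPoch q q n * z ^ n := by
      rw [← s1.tsum_sub s2, (s1.sub s2).tsum_eq_zero_add, ← tsum_mul_left]
      simp only [pow_zero, sub_self, zero_add]
      congr 1; ext n
      have := qq_ne q hq1 n
      have := one_sub_pow_ne q hq1 n
      rw [qP_succ, mul_pow, pow_succ, pow_succ q]; field_simp
    linear_combination -e
  have it : ∀ N : ℕ, ∑' n, 1 / qPoch q q n * (x * q ^ N) ^ n
      = qPoch x q N * ∑' n, 1 / qPoch q q n * x ^ n := by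
    intro N
    induction N with
    | zero => simp [qP_zero]
    | succ N ih =>
      have := step (x * q ^ N) (norm_mul_pow_lt q x hq1 hx N)
      rw [pow_succ, ← mul_assoc, this, ih, qP_succ]; ring
  have l1 := lim0 q hq1 (fun n => 1 / qPoch q q n) x (sum1 q hq1 x hx)
  have l2 := (qP_tendsto x q hq1).mul_const (∑' n, 1 / qPoch q q n * x ^ n)
  have := tendsto_nhds_unique (l2.congr fun N => (it N).symm) l1
  simpa [qP_zero] using this

theorem euler2 (q : ℂ) (hq1 : ‖q‖ < 1) (y : ℂ) :
    ∑' n, tauq q n * y ^ n = qPochInf y q := by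
  have step : ∀ z : ℂ, ∑' n, tauq q n * z ^ n = (1 - z) * ∑' n, tauq q n * (z * q) ^ n := by
    intro z
    have s1 := (sum2 q hq1 z).of_norm
    have s2 := (sum2 q hq1 (z * q)).of_norm
    have e : ∑' n, tauq q n * z ^ n - ∑' n, tauq q n * (z * q) ^ n
        = -z * ∑' n, tauq q n * (z * q) ^ n := by
      rw [← s1.tsum_sub s2, (s1.sub s2).tsum_eq_zero_add, ← tsum_mul_left]
      simp only [pow_zero, sub_self, zero_add]
      congr 1; ext n
      rw [mul_pow, mul_pow, pow_succ, pow_succ q]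
      linear_combination z ^ n * z * tauq_succ q hq1 n
    linear_combination e
  have it : ∀ N : ℕ, ∑' n, tauq q n * y ^ n
      = qPoch y q N * ∑' n, tauq q n * (y * q ^ N) ^ n := by
    intro N
    induction N with
    | zero => simp [qP_zero]
    | succ N ih =>
      have := step (y * q ^ N)
      rw [ih, this, pow_succ, ← mul_assoc, qP_succ]; ring
  have l1 := lim0 q hq1 (tauq q) y (sum2 q hq1 y)
  have l2 := (qP_tendsto y q hq1).mul l1
  have := tendsto_nhds_unique (l2.congr fun N => (it N).symm) tendsto_const_nhds
  simpa [tauq, qP_zero] using this.symm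

theorem stmt10 (q : ℂ) (hq0 : 0 < ‖q‖) (hq1 : ‖q‖ < 1)
    (x y : ℂ) (hx : ‖x‖ < 1) (hy : ∀ m : ℕ, y ≠ q ^ (-(m : ℤ))) :
    ∑' n : ℕ, x ^ n / (qPoch q q n * qPoch y q n)
    = (1 / (qPochInf x q * qPochInf y q)) *
      ∑' n : ℕ, qPoch x q n * (-1 : ℂ) ^ n * q ^ (n * (n - 1) / 2) * y ^ n / qPoch q q n := by
  have hq : q ≠ 0 := norm_pos_iff.mp hq0
  have hyn : ∀ n, qPoch y q n ≠ 0 := fun n => Finset.prod_ne_zero_iff.mpr fun k _ h => by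
    apply hy k
    rw [zpow_neg, zpow_natCast]
    exact eq_inv_of_mul_eq_one_left (sub_eq_zero.mp h).symm
  have hI : ∀ z : ℂ, ‖z‖ < 1 → qPochInf z q ≠ 0 := fun z hz =>
    left_ne_zero_of_mul_eq_one (euler1 q hq1 z hz)
  have hyI : qPochInf y q ≠ 0 := by
    have h0 : Filter.Tendsto (fun N : ℕ => y * q ^ N) Filter.atTop (nhds 0) := by
      simpa using (tendsto_pow_atTop_nhds_zero_of_norm_lt_one hq1).const_mul y
    have h1 := h0.norm
    rw [norm_zero] at h1
    obtain ⟨N, hN⟩ := (h1.eventually_lt_const one_pos).exists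
    rw [qPI_split y q hq1 N]
    exact mul_ne_zero (hyn N) (hI _ hN)
  have hxI := hI x hx
  let F : ℕ → ℕ → ℂ := fun n m => (1 / qPoch q q n * x ^ n) * (tauq q m * y ^ m) * (q ^ n) ^ m
  have hF : Summable (Function.uncurry F) := by
    have hs := (sum1 q hq1 x hx).mul_of_nonneg (sum2 q hq1 y) (fun _ => norm_nonneg _)
      (fun _ => norm_nonneg _)
    refine Summable.of_norm_bounded hs fun p => ?_
    simp only [F, Function.uncurry]
    rw [← norm_mul, norm_mul _ ((q ^ p.1) ^ p.2)]
    apply mul_le_of_le_one_right (norm_nonneg _)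
    rw [norm_pow, norm_pow]
    exact pow_le_one₀ (by positivity) (pow_le_one₀ (norm_nonneg _) hq1.le)
  have hc := hF.tsum_comm
  have e1 : ∀ n, ∑' m, F n m = qPochInf y q * (x ^ n / (qPoch q q n * qPoch y q n)) := by
    intro n
    have : ∀ m, F n m = (1 / qPoch q q n * x ^ n) * (tauq q m * (y * q ^ n) ^ m) := fun m => by
      simp only [F, mul_pow]; ring
    simp_rw [this]
    rw [tsum_mul_left, euler2 q hq1, qPI_split y q hq1 n]
    have := hyn n
    have := qq_ne q hq1 n
    field_simp
  have e2 : ∀ m, ∑' n, F n m = 1 / qPochInf x q *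
      (qPoch x q m * (-1 : ℂ) ^ m * q ^ (m * (m - 1) / 2) * y ^ m / qPoch q q m) := by
    intro m
    have : ∀ n, F n m = (tauq q m * y ^ m) * (1 / qPoch q q n * (x * q ^ m) ^ n) := fun n => by
      simp only [F, mul_pow]; rw [← pow_mul, ← pow_mul, mul_comm n m]; ring
    simp_rw [this]
    have h := euler1 q hq1 _ (norm_mul_pow_lt q x hq1 hx m)
    have hs := qPI_split x q hq1 m
    rw [tsum_mul_left, eq_one_div_of_mul_eq_one_right h, hs]
    have := hI _ (norm_mul_pow_lt q x hq1 hx m)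
    have : qPoch x q m ≠ 0 := fun h0 => hxI (by rw [hs, h0, zero_mul])
    have := qq_ne q hq1 m
    rw [tauq]
    field_simp
  simp_rw [e1, e2] at hc
  rw [tsum_mul_left, tsum_mul_left] at hc
  rw [one_div, mul_inv, mul_comm (qPochInf x q)⁻¹, mul_assoc, eq_inv_mul_iff_mul_eq₀ hyI, ← one_div]
  first
  | exact hc
  | exact hc.symm
end
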